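/- (Shrinkage equals Tikhonov regularization.) Let Σ be a real m×m matrix, let I, J ⊆ {1,…,m} be disjoint index sets, let α ∈ (0,1), let c = Trace(Σ)/m, and define the shrinkage estimator Σ_α = (1−α)Σ + αc·I_m. Set λ = αc/(1−α). If Σ_{I,I} + λI is invertible, then (Σ_α)_{I,I} is invertible and (Σ_α)_{I,I}⁻¹(Σ_α)_{I,J} = (Σ_{I,I} + λI)⁻¹Σ_{I,J}; that is, the MVN prediction coefficient computed from the shrinkage covariance matrix equals the Tikhonov-regularized (ridge) coefficient computed from the original covariance matrix with regularization parameter λ. -/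

import Mathlib

open Matrix

/-- Shrinkage equals Tikhonov regularization: with `Σ_α = (1−α)Σ + α(Trace Σ/m)·I` and
`λ = αc/(1−α)`, if `Σ_{I,I} + λI` is invertible then `(Σ_α)_{I,I}` is invertible and
`(Σ_α)_{I,I}⁻¹(Σ_α)_{I,J} = (Σ_{I,I} + λI)⁻¹Σ_{I,J}` for disjoint `I`, `J`. -/
theorem shrinkage_eq_tikhonov {m : ℕ}
    (Sig : Matrix (Fin m) (Fin m) ℝ) (I J : Finset (Fin m)) (hIJ : Disjoint I J)
    (α : ℝ) (hα : α ∈ Set.Ioo (0 : ℝ) 1)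
    (c lam : ℝ) (hc : c = Sig.trace / m) (hlam : lam = α * c / (1 - α))
    (Sa : Matrix (Fin m) (Fin m) ℝ)
    (hSa : Sa = (1 - α) • Sig + (α * c) • (1 : Matrix (Fin m) (Fin m) ℝ))
    (hinv : IsUnit (Sig.submatrix (Subtype.val : {j // j ∈ I} → Fin m)
        (Subtype.val : {j // j ∈ I} → Fin m) + lam • 1)) :
    IsUnit (Sa.submatrix (Subtype.val : {j // j ∈ I} → Fin m)
        (Subtype.val : {j // j ∈ I} → Fin m)) ∧
    (Sa.submatrix (Subtype.val : {j // j ∈ I} → Fin m)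
          (Subtype.val : {j // j ∈ I} → Fin m))⁻¹ *
        Sa.submatrix (Subtype.val : {j // j ∈ I} → Fin m)
          (Subtype.val : {j // j ∈ J} → Fin m)
      = (Sig.submatrix (Subtype.val : {j // j ∈ I} → Fin m)
            (Subtype.val : {j // j ∈ I} → Fin m) + lam • 1)⁻¹ *
          Sig.submatrix (Subtype.val : {j // j ∈ I} → Fin m)
            (Subtype.val : {j // j ∈ J} → Fin m) := by
  have h1 : (1 - α) ≠ 0 := by
    have := hα.2
    intro h
    linarith
  have hII : Sa.submatrix (Subtype.val : {j // j ∈ I} → Fin m)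
        (Subtype.val : {j // j ∈ I} → Fin m) =
      (1 - α) • (Sig.submatrix (Subtype.val : {j // j ∈ I} → Fin m)
        (Subtype.val : {j // j ∈ I} → Fin m) + lam • 1) := by
    have h2 : (1 - α) * lam = α * c := by
      rw [hlam]
      field_simp
    rw [smul_add, smul_smul, h2, hSa]
    ext i j
    by_cases h : i = j
    · subst h
      simp
    · have h' : (i : Fin m) ≠ j := fun e => h (Subtype.ext e)
      simp [h, h']
  have hIJ' : Sa.submatrix (Subtype.val : {j // j ∈ I} → Fin m)
        (Subtype.val : {j // j ∈ J} → Fin m) =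
      (1 - α) • Sig.submatrix (Subtype.val : {j // j ∈ I} → Fin m)
        (Subtype.val : {j // j ∈ J} → Fin m) := by
    rw [hSa]
    ext i j
    have hne : (i : Fin m) ≠ j := fun h =>
      Finset.disjoint_left.mp hIJ i.2 (h ▸ j.2)
    simp [hne]
  rw [hII, hIJ']
  refine ⟨IsUnit.smul (Units.mk0 _ h1) hinv, ?_⟩
  have hdet := (Matrix.isUnit_iff_isUnit_det _).mp hinv
  have hs := Matrix.inv_smul' _ (Units.mk0 _ h1) hdet
  rw [Units.smul_def, Units.val_mk0] at hs
  rw [hs, Units.smul_def, Matrix.smul_mul, Matrix.mul_smul, smul_smul]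
  simp [h1]
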